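/- Let A be a Nakayama algebra and X an indecomposable module, and set e(X) = min{pd X, pd IX}, where IX is the injective envelope of X. Then e(X) = min{pd Y : Y finitely generated and X ⊆ Y}, and del X ≤ e(X). -/

import Mathlib

open CategoryTheory CategoryTheory.Limits

noncomputable section

namespace ArtinAlg

variable (A : Type) [Ring A]

/-- `M` admits a projective resolution of length at most `n`. -/
inductive ProjDimLE : ℕ → ModuleCat.{0} A → Prop
  | zero (M : ModuleCat.{0} A) (h : Projective M) : ProjDimLE 0 M
  | succ (n : ℕ) (M P : ModuleCat.{0} A) (f : P ⟶ M) (hP : Projective P) (hf : Epi f)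
      (h : ProjDimLE n (kernel f)) : ProjDimLE (n + 1) M

/-- `M` admits an injective coresolution of length at most `n`. -/
inductive InjDimLE : ℕ → ModuleCat.{0} A → Prop
  | zero (M : ModuleCat.{0} A) (h : Injective M) : InjDimLE 0 M
  | succ (n : ℕ) (M I : ModuleCat.{0} A) (f : M ⟶ I) (hI : Injective I) (hf : Mono f)
      (h : InjDimLE n (cokernel f)) : InjDimLE (n + 1) M

/-- The projective dimension `pd M ∈ ℕ∞`. -/
def projDim (M : ModuleCat.{0} A) : ℕ∞ :=
  sInf {d : ℕ∞ | ∃ n : ℕ, d = n ∧ ProjDimLE A n M}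

/-- The injective dimension `id M ∈ ℕ∞`. -/
def injDim (M : ModuleCat.{0} A) : ℕ∞ :=
  sInf {d : ℕ∞ | ∃ n : ℕ, d = n ∧ InjDimLE A n M}

/-- `f : P ⟶ M` is a projective cover: `P` is projective and `f` is an essential
(superfluous) epimorphism. -/
def IsProjectiveCoverHom {P M : ModuleCat.{0} A} (f : P ⟶ M) : Prop :=
  Projective P ∧ Epi f ∧ ∀ (N : ModuleCat.{0} A) (g : N ⟶ P), Epi (g ≫ f) → Epi g

/-- `P` is a projective cover of `M`. -/
def IsProjCoverOf (M P : ModuleCat.{0} A) : Prop :=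
  ∃ f : P ⟶ M, IsProjectiveCoverHom A f

/-- `f : M ⟶ I` is an injective envelope: `I` is injective and `f` is an essential
monomorphism. -/
def IsInjectiveEnvelopeHom {M I : ModuleCat.{0} A} (f : M ⟶ I) : Prop :=
  Injective I ∧ Mono f ∧ ∀ (N : ModuleCat.{0} A) (g : I ⟶ N), Mono (f ≫ g) → Mono g

/-- `I` is an injective envelope of `M`. -/
def IsInjEnvOf (M I : ModuleCat.{0} A) : Prop :=
  ∃ f : M ⟶ I, IsInjectiveEnvelopeHom A f

/-- `X ≅ Ω M`, the kernel of a projective cover of `M`. -/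
def IsSyzygyOf (M X : ModuleCat.{0} A) : Prop :=
  ∃ (P : ModuleCat.{0} A) (f : P ⟶ M), IsProjectiveCoverHom A f ∧ Nonempty (X ≅ kernel f)

/-- `X ≅ Σ M`, the cokernel of an injective envelope of `M`. -/
def IsCosyzygyOf (M X : ModuleCat.{0} A) : Prop :=
  ∃ (I : ModuleCat.{0} A) (f : M ⟶ I), IsInjectiveEnvelopeHom A f ∧ Nonempty (X ≅ cokernel f)

/-- `X ≅ Ω^n M`. -/
def IsNthSyzygy : ℕ → ModuleCat.{0} A → ModuleCat.{0} A → Prop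
  | 0, M, X => Nonempty (X ≅ M)
  | n + 1, M, X => ∃ Y, IsSyzygyOf A M Y ∧ IsNthSyzygy n Y X

/-- `X ≅ Σ^n M`. -/
def IsNthCosyzygy : ℕ → ModuleCat.{0} A → ModuleCat.{0} A → Prop
  | 0, M, X => Nonempty (X ≅ M)
  | n + 1, M, X => ∃ Y, IsCosyzygyOf A M Y ∧ IsNthCosyzygy n Y X

/-- `X` is a direct summand of `Y`. -/
def IsDirectSummandOf (X Y : ModuleCat.{0} A) : Prop :=
  ∃ (i : X ⟶ Y) (r : Y ⟶ X), i ≫ r = 𝟙 X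

/-- `X ∈ add W` : `X` is a direct summand of a finite direct sum of copies of `W`. -/
def InAdd (X W : ModuleCat.{0} A) : Prop :=
  ∃ n : ℕ, IsDirectSummandOf A X (ModuleCat.of A (Fin n → ↥W))

/-- The delooping level of `M` is at most `d` :
`Ω^d M ∈ add (A ⊕ Ω^{d+1} M')` for some finitely generated `M'`. -/
def DelLE (d : ℕ) (M : ModuleCat.{0} A) : Prop :=
  ∃ X, IsNthSyzygy A d M X ∧
    ∃ M' : ModuleCat.{0} A, Module.Finite A ↥M' ∧
      ∃ X', IsNthSyzygy A (d + 1) M' X' ∧ InAdd A X (ModuleCat.of A (A × ↥X'))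

/-- The delooping level `del M ∈ ℕ∞`. -/
def delLevel (M : ModuleCat.{0} A) : ℕ∞ :=
  sInf {d : ℕ∞ | ∃ n : ℕ, d = n ∧ DelLE A n M}

/-- The delooping level of the algebra: the supremum of `del S` over the simple modules. -/
def delAlg : ℕ∞ :=
  sSup {d : ℕ∞ | ∃ S : ModuleCat.{0} A, IsSimpleModule A ↥S ∧ delLevel A S = d}

/-- `Q` is a minimal injective cogenerator: the injective envelope of the direct sum of
a complete set of representatives of the simple modules. -/
def IsMinimalInjectiveCogenerator (Q : ModuleCat.{0} A) : Prop :=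
  ∃ (ι : Type) (_ : Fintype ι) (S : ι → ModuleCat.{0} A),
    (∀ i, IsSimpleModule A ↥(S i)) ∧
    (∀ T : ModuleCat.{0} A, IsSimpleModule A ↥T → ∃! i, Nonempty (↥T ≃ₗ[A] ↥(S i))) ∧
    IsInjEnvOf A (ModuleCat.of A (∀ i, ↥(S i))) Q

/-- The desuspending level of `M` is at most `d` :
`Σ^d M ∈ add (D(A) ⊕ Σ^{d+1} M')` for some finitely generated `M'`. -/
def DesLE (d : ℕ) (M : ModuleCat.{0} A) : Prop :=
  ∃ X, IsNthCosyzygy A d M X ∧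
    ∃ Q, IsMinimalInjectiveCogenerator A Q ∧
      ∃ M' : ModuleCat.{0} A, Module.Finite A ↥M' ∧
        ∃ X', IsNthCosyzygy A (d + 1) M' X' ∧ InAdd A X (ModuleCat.of A (↥Q × ↥X'))

/-- The desuspending level `des M ∈ ℕ∞`. -/
def desLevel (M : ModuleCat.{0} A) : ℕ∞ :=
  sInf {d : ℕ∞ | ∃ n : ℕ, d = n ∧ DesLE A n M}

/-- The desuspending level of the algebra. -/
def desAlg : ℕ∞ :=
  sSup {d : ℕ∞ | ∃ S : ModuleCat.{0} A, IsSimpleModule A ↥S ∧ desLevel A S = d}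

/-- The (small) finitistic projective dimension `fin-pro A`. -/
def finProDim : ℕ∞ :=
  sSup {d : ℕ∞ | ∃ M : ModuleCat.{0} A, Module.Finite A ↥M ∧ projDim A M = d ∧ d ≠ ⊤}

/-- The (small) finitistic injective dimension `fin-inj A`. -/
def finInjDim : ℕ∞ :=
  sSup {d : ℕ∞ | ∃ M : ModuleCat.{0} A, Module.Finite A ↥M ∧ injDim A M = d ∧ d ≠ ⊤}

/-- The big finitistic projective dimension `Fin-pro A`. -/
def bigFinProDim : ℕ∞ :=
  sSup {d : ℕ∞ | ∃ M : ModuleCat.{0} A, projDim A M = d ∧ d ≠ ⊤}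

/-- The big finitistic injective dimension `Fin-inj A`. -/
def bigFinInjDim : ℕ∞ :=
  sSup {d : ℕ∞ | ∃ M : ModuleCat.{0} A, injDim A M = d ∧ d ≠ ⊤}

/-- `M` is an indecomposable nonzero module. -/
def Indec (M : ModuleCat.{0} A) : Prop :=
  Nontrivial ↥M ∧ ∀ (N₁ N₂ : Submodule A ↥M), IsCompl N₁ N₂ → N₁ = ⊥ ∨ N₂ = ⊥

/-- `M` is serial (uniserial): its submodules form a chain. -/
def IsUniserial (M : ModuleCat.{0} A) : Prop :=
  ∀ N₁ N₂ : Submodule A ↥M, N₁ ≤ N₂ ∨ N₂ ≤ N₁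

/-- `A` is a Nakayama algebra: all finitely generated indecomposable modules are serial. -/
def IsNakayama : Prop :=
  ∀ M : ModuleCat.{0} A, Module.Finite A ↥M → Indec A M → IsUniserial A M

/-- `A` is connected: it is not a nontrivial product of algebras. -/
def IsConnectedAlgebra : Prop :=
  Nontrivial A ∧ ∀ e : A, IsIdempotentElem e → e ∈ Set.center A → e = 0 ∨ e = 1

/-- `A` is a cyclic Nakayama algebra: connected Nakayama with no simple projective module. -/
def IsCyclicNakayama : Prop :=
  IsNakayama A ∧ IsConnectedAlgebra A ∧
    ¬ ∃ S : ModuleCat.{0} A, IsSimpleModule A ↥S ∧ Projective S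

/-- `T ≅ top M` (and `top M` is simple): there is an essential epimorphism `M ⟶ T`. -/
def IsSimpleTopOf (M T : ModuleCat.{0} A) : Prop :=
  IsSimpleModule A ↥T ∧
    ∃ f : M ⟶ T, Epi f ∧ ∀ (N : ModuleCat.{0} A) (g : N ⟶ M), Epi (g ≫ f) → Epi g

/-- `S ≅ soc M` (and `soc M` is simple): there is an essential monomorphism `S ⟶ M`. -/
def IsSimpleSocOf (M S : ModuleCat.{0} A) : Prop :=
  IsSimpleModule A ↥S ∧
    ∃ f : S ⟶ M, Mono f ∧ ∀ (N : ModuleCat.{0} A) (g : M ⟶ N), Mono (f ≫ g) → Mono g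

/-- `0 ⟶ N ⟶ E ⟶ M ⟶ 0` is an almost split (Auslander-Reiten) sequence. -/
def IsAlmostSplitSeq {N E M : ModuleCat.{0} A} (f : N ⟶ E) (g : E ⟶ M) : Prop :=
  Mono f ∧ Epi g ∧ (∃ w : f ≫ g = 0, (ShortComplex.mk f g w).Exact) ∧
  (¬ ∃ s : M ⟶ E, s ≫ g = 𝟙 M) ∧ Indec A N ∧ Indec A M ∧
  ∀ (X : ModuleCat.{0} A) (h : X ⟶ M), (¬ ∃ s : M ⟶ X, s ≫ h = 𝟙 M) → ∃ h' : X ⟶ E, h' ≫ g = h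

/-- `N ≅ τ M`, the Auslander-Reiten translate of `M` : there is an almost split sequence
`0 ⟶ N ⟶ E ⟶ M ⟶ 0`. -/
def IsTauOf (N M : ModuleCat.{0} A) : Prop :=
  ∃ (E : ModuleCat.{0} A) (f : N ⟶ E) (g : E ⟶ M), IsAlmostSplitSeq A f g

/-- `U ≅ ψ S = τ⁻ top (I S)`. -/
def IsPsiOf (S U : ModuleCat.{0} A) : Prop :=
  ∃ I, IsInjEnvOf A S I ∧ ∃ T, IsSimpleTopOf A I T ∧ IsTauOf A T U

/-- `T ≅ γ S = τ soc (P S)`. -/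
def IsGammaOf (S T : ModuleCat.{0} A) : Prop :=
  ∃ P, IsProjCoverOf A S P ∧ ∃ U, IsSimpleSocOf A P U ∧ IsTauOf A T U

/-- `T ≅ φ S = top (I S)`. -/
def IsPhiOf (S T : ModuleCat.{0} A) : Prop :=
  ∃ I, IsInjEnvOf A S I ∧ IsSimpleTopOf A I T

/-- There is a `ψ`-path `(S_1, …, S_m)` of cardinality `m` ending in `S`. -/
def PsiPathTo (m : ℕ) (S : ModuleCat.{0} A) : Prop :=
  1 ≤ m ∧ ∃ c : ℕ → ModuleCat.{0} A,
    (∀ i < m, IsSimpleModule A ↥(c i)) ∧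
    (∀ i, i + 1 < m → IsPsiOf A (c i) (c (i + 1))) ∧
    Nonempty (c (m - 1) ≅ S)

/-- `a(S)`: the supremum of the cardinalities of `ψ`-paths ending in `S`. -/
def aVal (S : ModuleCat.{0} A) : ℕ∞ :=
  sSup {d : ℕ∞ | ∃ m : ℕ, d = m ∧ PsiPathTo A m S}

/-- `a(A)`: the maximum of `a(S)` over the simple modules which are not `ψ`-cyclic. -/
def aAlg : ℕ∞ :=
  sSup {d : ℕ∞ | ∃ S : ModuleCat.{0} A, IsSimpleModule A ↥S ∧ aVal A S ≠ ⊤ ∧ aVal A S = d}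

/-- `S` is a composition factor of `M`: a simple subquotient of `M`. -/
def IsCompFactorOf (S M : ModuleCat.{0} A) : Prop :=
  IsSimpleModule A ↥S ∧ ∃ N' N : Submodule A ↥M, N' ≤ N ∧
    Nonempty ((↥N ⧸ N'.comap N.subtype) ≃ₗ[A] ↥S)

/-- `e(S) = min {pd S, pd (I S)} = x`. -/
def ERelVal (S : ModuleCat.{0} A) (x : ℕ∞) : Prop :=
  ∃ I, IsInjEnvOf A S I ∧ x = min (projDim A S) (projDim A I)

/-- `e*(S) = min {id S, id (P S)} = x`. -/
def EStarVal (S : ModuleCat.{0} A) (x : ℕ∞) : Prop :=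
  ∃ P, IsProjCoverOf A S P ∧ x = min (injDim A S) (injDim A P)

/-- `T = h(S) = top (Ω^{e(S)} N S)`, the homological permutation. -/
def HRel (S T : ModuleCat.{0} A) : Prop :=
  IsSimpleModule A ↥S ∧ IsSimpleModule A ↥T ∧
  ∃ z : ℕ, ERelVal A S z ∧
    ∃ N, ((Odd z ∧ N = S) ∨ (Even z ∧ IsInjEnvOf A S N)) ∧
      ∃ X, IsNthSyzygy A z N X ∧ IsSimpleTopOf A X T

/-- `S = h*(T) = soc (Σ^{e*(T)} N* T)`, the inverse homological permutation. -/
def HStarRel (T S : ModuleCat.{0} A) : Prop :=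
  IsSimpleModule A ↥T ∧ IsSimpleModule A ↥S ∧
  ∃ z : ℕ, EStarVal A T z ∧
    ∃ N, ((Odd z ∧ N = T) ∨ (Even z ∧ IsProjCoverOf A T N)) ∧
      ∃ X, IsNthCosyzygy A z N X ∧ IsSimpleSocOf A X S

/-- The `t`-fold relational iterate of a relation on modules (up to isomorphism). -/
def IterRel (r : ModuleCat.{0} A → ModuleCat.{0} A → Prop) :
    ℕ → ModuleCat.{0} A → ModuleCat.{0} A → Prop
  | 0, X, Y => Nonempty (X ≅ Y)
  | n + 1, X, Y => ∃ Z, r X Z ∧ IterRel r n Z Y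

end ArtinAlg

/-!
Let `X ⊆ Y` with `Y` finitely generated. A direct summand `K` of `Y` that is minimal among those
to which `X` projects injectively is indecomposable, hence uniserial, and the embedding of `X` into
its injective envelope `I` extends to an embedding of `K`. So `X ⊆ K ⊆ I` is a chain of uniserial
modules with `pd K ≤ pd Y`, and it remains to see that `pd K` is at least `pd X` or at least `pd I`.

Over a Nakayama algebra, uniserial modules have uniserial projective covers, so the syzygies of a
chain `X ↪ K ↪ I` form a chain of epimorphisms `ΩX ↠ ΩK ↠ ΩI`, and the syzygies of a chain of
epimorphisms, taken with respect to one common projective cover, form a chain of monomorphisms. The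
two kinds of chains alternate, with `pd` dropping by one each time, until the middle term vanishes;
then the first term (for monomorphisms) or the last one (for epimorphisms) vanishes as well.

For the delooping level, let `0 → X → Y → W → 0` be exact with `pd Y ≤ n`. Taking syzygies `n` times
by the horseshoe lemma replaces `Y` by a projective module `Y'`, and then Schanuel's argument
exhibits `Ω^n X` as a direct summand of `Ω^(n+1) W ⊕ Y'`.
-/

namespace ArtinAlg

section Uniserial

variable {R M N P : Type*} [Ring R] [AddCommGroup M] [Module R M] [AddCommGroup N] [Module R N]
  [AddCommGroup P] [Module R P]

/-- `M` is uniserial: its submodules form a chain. This is the unbundled form of `IsUniserial`,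
a class so that it passes to submodules by instance search. -/
class IsUniserialModule (R M : Type*) [Ring R] [AddCommGroup M] [Module R M] : Prop where
  le_total : ∀ N₁ N₂ : Submodule R M, N₁ ≤ N₂ ∨ N₂ ≤ N₁

namespace IsUniserialModule

theorem of_injective [IsUniserialModule R N] (f : M →ₗ[R] N) (hf : Function.Injective f) :
    IsUniserialModule R M where
  le_total N₁ N₂ := by
    simpa only [Submodule.map_le_map_iff_of_injective hf] using le_total (N₁.map f) (N₂.map f)

theorem of_surjective [IsUniserialModule R M] (f : M →ₗ[R] N) (hf : Function.Surjective f) :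
    IsUniserialModule R N where
  le_total N₁ N₂ := by
    simpa only [Submodule.comap_le_comap_iff_of_surjective hf]
      using le_total (N₁.comap f) (N₂.comap f)

instance submodule [IsUniserialModule R M] (N : Submodule R M) : IsUniserialModule R N :=
  of_injective N.subtype N.injective_subtype

instance of_subsingleton [Subsingleton M] : IsUniserialModule R M where
  le_total _ _ := Or.inl (Subsingleton.elim _ _).le

theorem of_fg (h : ∀ N : Submodule R M, N.FG → IsUniserialModule R N) : IsUniserialModule R M where
  le_total N₁ N₂ := by
    by_contra! hN
    obtain ⟨x, hx₁, hx₂⟩ := SetLike.not_le_iff_exists.1 hN.1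
    obtain ⟨y, hy₂, hy₁⟩ := SetLike.not_le_iff_exists.1 hN.2
    let N := Submodule.span R {x, y}
    have hxN : x ∈ N := Submodule.subset_span (by simp)
    have hyN : y ∈ N := Submodule.subset_span (by simp)
    have := h N (Submodule.fg_span (Set.toFinite _))
    rcases le_total (N₁.comap N.subtype) (N₂.comap N.subtype) with hle | hle
    · exact hx₂ (hle (x := ⟨x, hxN⟩) hx₁)
    · exact hy₁ (hle (x := ⟨y, hyN⟩) hy₂)

theorem injective_or_injective_of_disjoint_ker [IsUniserialModule R M] (f : M →ₗ[R] N)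
    (g : M →ₗ[R] P) (h : Disjoint (LinearMap.ker f) (LinearMap.ker g)) :
    Function.Injective f ∨ Function.Injective g := by
  simp only [← LinearMap.ker_eq_bot]
  exact (le_total (LinearMap.ker f) (LinearMap.ker g)).imp h.eq_bot_of_le h.symm.eq_bot_of_le

theorem surjective_or_surjective_of_codisjoint_range [IsUniserialModule R M] (f : N →ₗ[R] M)
    (g : P →ₗ[R] M) (h : Codisjoint (LinearMap.range f) (LinearMap.range g)) :
    Function.Surjective f ∨ Function.Surjective g := by
  simp only [← LinearMap.range_eq_top]
  exact (le_total (LinearMap.range g) (LinearMap.range f)).imp h.eq_top_of_le h.symm.eq_top_of_le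

theorem injective_of_comp_injective [Nontrivial M] [IsUniserialModule R N] (f : M →ₗ[R] N)
    (g : N →ₗ[R] P) (h : Function.Injective (g ∘ₗ f)) : Function.Injective g := by
  rw [← LinearMap.ker_eq_bot]
  rcases le_total (LinearMap.ker g) (LinearMap.range f) with hle | hle
  · refine (Submodule.eq_bot_iff _).2 fun x hx ↦ ?_
    obtain ⟨y, rfl⟩ := hle hx
    rw [(map_eq_zero_iff (g ∘ₗ f) h).1 hx, map_zero]
  · obtain ⟨y, hy⟩ := exists_ne (0 : M)
    exact absurd ((map_eq_zero_iff (g ∘ₗ f) h).1 (hle ⟨y, rfl⟩)) hy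

theorem injective_of_surjective_of_projective [IsUniserialModule R M] [Nontrivial N]
    [Module.Projective R N] (f : M →ₗ[R] N) (hf : Function.Surjective f) :
    Function.Injective f := by
  obtain ⟨s, hs⟩ := Module.projective_lifting_property f LinearMap.id hf
  exact injective_of_comp_injective s f (hs ▸ Function.injective_id)

variable (R M) in
theorem finite_of_isSemisimpleModule [IsSemisimpleModule R M] [IsUniserialModule R M] :
    Module.Finite R M := by
  rcases subsingleton_or_nontrivial M with _ | _
  · infer_instance
  obtain ⟨x, hx⟩ := exists_ne (0 : M)
  obtain ⟨C, hC⟩ := exists_isCompl (Submodule.span R {x})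
  rcases le_total (Submodule.span R {x}) C with hle | hle
  · exact absurd (Submodule.span_singleton_eq_bot.1 (hC.disjoint.eq_bot_of_le hle)) hx
  · have htop : Submodule.span R {x} = ⊤ := hC.codisjoint.eq_top_of_le hle
    exact ⟨htop ▸ Submodule.fg_span_singleton x⟩

variable (R M) in
theorem finite [IsSemiprimaryRing R] [hM : IsUniserialModule R M] : Module.Finite R M := by
  refine IsSemiprimaryRing.induction ℤ R M
    (P := fun M ↦ IsUniserialModule R M → Module.Finite R M) ?_ ?_ hM
  · intro M _ _ _ _ _ _ _
    exact finite_of_isSemisimpleModule R M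
  · intro M _ _ _ _ N hN hQ _
    have := hN inferInstance
    have := hQ (of_surjective N.mkQ N.mkQ_surjective)
    exact .of_submodule_quotient N

end IsUniserialModule

end Uniserial

section ProjectiveCover

variable {A : Type} [Ring A]

theorem isProjectiveCoverHom_iff {P M : ModuleCat.{0} A} {f : P ⟶ M} :
    IsProjectiveCoverHom A f ↔ Module.Projective A P ∧ Function.Surjective f.hom ∧
      ∀ N : Submodule A P, N.map f.hom = ⊤ → N = ⊤ := by
  rw [IsProjectiveCoverHom, ← IsProjective.iff_projective, ModuleCat.epi_iff_surjective]
  refine and_congr_right fun _ ↦ and_congr_right fun _ ↦ ⟨fun h N hN ↦ ?_, fun h N g hg ↦ ?_⟩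
  · have hepi : Epi (ModuleCat.ofHom N.subtype ≫ f) := by
      rw [ModuleCat.epi_iff_range_eq_top, ModuleCat.hom_comp, LinearMap.range_comp,
        ModuleCat.hom_ofHom, N.range_subtype, hN]
    simpa only [ModuleCat.epi_iff_range_eq_top, ModuleCat.hom_ofHom, N.range_subtype]
      using h _ _ hepi
  · rw [ModuleCat.epi_iff_range_eq_top] at hg ⊢
    exact h _ (by rw [← LinearMap.range_comp, ← ModuleCat.hom_comp, hg])

theorem exists_isProjectiveCoverHom [IsArtinianRing A] (M : ModuleCat.{0} A) [Module.Finite A M] :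
    ∃ (P : ModuleCat.{0} A) (f : P ⟶ M), Module.Finite A P ∧ IsProjectiveCoverHom A f := by
  obtain ⟨k, F, hF⟩ := Module.Finite.exists_fin' A M
  obtain ⟨N, hN, hmin⟩ := exists_minimal_of_wellFoundedLT
    (fun N : Submodule A (Fin k → A) ↦ N.map F = ⊤)
    ⟨⊤, by rw [Submodule.map_top, LinearMap.range_eq_top.2 hF]⟩
  let π : N →ₗ[A] M := F ∘ₗ N.subtype
  have hπ : Function.Surjective π := by
    rw [← LinearMap.range_eq_top, LinearMap.range_comp, N.range_subtype, hN]
  have hess (K : Submodule A N) (hK : K.map π = ⊤) : K = ⊤ := by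
    have hle : N ≤ K.map N.subtype :=
      hmin (by rwa [Submodule.map_comp] at hK) (N.map_subtype_le K)
    rwa [← Submodule.comap_subtype_eq_top,
      Submodule.comap_map_eq_of_injective N.injective_subtype] at hle
  obtain ⟨h, hh⟩ := Module.projective_lifting_property π F hπ
  -- `N` is a retract of `A ^ k`, because `h` restricts to an automorphism of `N`: the
  -- restriction is onto by essentiality of `π`, and `N` is noetherian.
  have hsurj : Function.Surjective (h ∘ₗ N.subtype) := by
    rw [← LinearMap.range_eq_top]
    refine hess _ ?_
    rw [← LinearMap.range_comp, ← LinearMap.comp_assoc, hh, LinearMap.range_eq_top.2 hπ]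
  let e : N ≃ₗ[A] N := .ofBijective _ (IsNoetherian.bijective_of_surjective_endomorphism _ hsurj)
  have hproj : Module.Projective A N :=
    .of_split (N.subtype ∘ₗ e.symm.toLinearMap) h (LinearMap.ext e.apply_symm_apply)
  exact ⟨.of A N, ModuleCat.ofHom π, inferInstance,
    isProjectiveCoverHom_iff.2 ⟨hproj, hπ, hess⟩⟩

end ProjectiveCover

section Nakayama

variable {A : Type} [Ring A]

theorem IsNakayama.isUniserialModule (hNak : IsNakayama A) {M : Type} [AddCommGroup M]
    [Module A M] [Module.Finite A M]
    (h : ∀ N₁ N₂ : Submodule A M, IsCompl N₁ N₂ → N₁ = ⊥ ∨ N₂ = ⊥) : IsUniserialModule A M := by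
  rcases subsingleton_or_nontrivial M with _ | hM
  · infer_instance
  · exact ⟨hNak (.of A M) inferInstance ⟨hM, h⟩⟩

theorem IsNakayama.isUniserialModule_of_isProjectiveCoverHom (hNak : IsNakayama A)
    {P M : ModuleCat.{0} A} [Module.Finite A P] [IsUniserialModule A M] {f : P ⟶ M}
    (hf : IsProjectiveCoverHom A f) : IsUniserialModule A P := by
  obtain ⟨-, hsurj, hess⟩ := isProjectiveCoverHom_iff.1 hf
  have heq_top (N : Submodule A P) (hN : Function.Surjective (f.hom ∘ₗ N.subtype)) : N = ⊤ := by
    refine hess N ?_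
    rwa [← LinearMap.range_eq_top, LinearMap.range_comp, N.range_subtype] at hN
  refine hNak.isUniserialModule fun N₁ N₂ h ↦ ?_
  have hcodisj : Codisjoint (LinearMap.range (f.hom ∘ₗ N₁.subtype))
      (LinearMap.range (f.hom ∘ₗ N₂.subtype)) := by
    rw [codisjoint_iff, LinearMap.range_comp, LinearMap.range_comp, ← Submodule.map_sup,
      N₁.range_subtype, N₂.range_subtype, h.sup_eq_top, Submodule.map_top,
      LinearMap.range_eq_top.2 hsurj]
  rcases IsUniserialModule.surjective_or_surjective_of_codisjoint_range _ _ hcodisj with h₁ | h₂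
  · exact Or.inr (eq_bot_of_top_isCompl (heq_top N₁ h₁ ▸ h))
  · exact Or.inl (eq_bot_of_isCompl_top (heq_top N₂ h₂ ▸ h))

theorem IsNakayama.exists_uniserial_retract [IsArtinianRing A] (hNak : IsNakayama A)
    {X Y : Type} [AddCommGroup X] [Module A X] [AddCommGroup Y] [Module A Y]
    [IsUniserialModule A X] [Module.Finite A Y] (f : X →ₗ[A] Y) (hf : Function.Injective f) :
    ∃ (K : Submodule A Y) (r : Y →ₗ[A] K), IsUniserialModule A K ∧
      r ∘ₗ K.subtype = LinearMap.id ∧ Function.Injective (r ∘ₗ f) := by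
  obtain ⟨K, ⟨r, hr, hrf⟩, hmin⟩ := exists_minimal_of_wellFoundedLT
    (fun K : Submodule A Y ↦ ∃ r : Y →ₗ[A] K, r ∘ₗ K.subtype = LinearMap.id ∧
      Function.Injective (r ∘ₗ f))
    ⟨⊤, Submodule.topEquiv.symm.toLinearMap, rfl, Submodule.topEquiv.symm.injective.comp hf⟩
  have heq_top {N₁ N₂ : Submodule A K} (h : IsCompl N₁ N₂)
      (hinj : Function.Injective (N₁.projectionOnto N₂ h ∘ₗ r ∘ₗ f)) : N₁ = ⊤ := by
    let e := N₁.equivMapOfInjective K.subtype K.injective_subtype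
    have hle : K ≤ N₁.map K.subtype := by
      refine hmin ⟨e.toLinearMap ∘ₗ N₁.projectionOnto N₂ h ∘ₗ r, ?_, e.injective.comp hinj⟩
        (K.map_subtype_le N₁)
      ext ⟨_, x, hx, rfl⟩
      have hrx : r (x : Y) = x := LinearMap.congr_fun hr x
      simp [hrx, e, Submodule.projectionOnto_apply_of_mem_left h hx]
    rwa [← Submodule.comap_subtype_eq_top,
      Submodule.comap_map_eq_of_injective K.injective_subtype] at hle
  refine ⟨K, r, hNak.isUniserialModule fun N₁ N₂ h ↦ ?_, hr, hrf⟩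
  have hdisj : Disjoint (LinearMap.ker (N₁.projectionOnto N₂ h ∘ₗ r ∘ₗ f))
      (LinearMap.ker (N₂.projectionOnto N₁ h.symm ∘ₗ r ∘ₗ f)) := by
    rw [LinearMap.ker_comp, LinearMap.ker_comp, disjoint_iff, ← Submodule.comap_inf,
      Submodule.ker_projectionOnto, Submodule.ker_projectionOnto, h.symm.inf_eq_bot,
      Submodule.comap_bot, LinearMap.ker_eq_bot.2 hrf]
  rcases IsUniserialModule.injective_or_injective_of_disjoint_ker _ _ hdisj with h₁ | h₂
  · exact Or.inr (eq_bot_of_top_isCompl (heq_top h h₁ ▸ h))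
  · exact Or.inl (eq_bot_of_isCompl_top (heq_top h.symm h₂ ▸ h))

theorem IsNakayama.isUniserialModule_of_essential (hNak : IsNakayama A) {M E : Type}
    [AddCommGroup M] [Module A M] [AddCommGroup E] [Module A E] [IsUniserialModule A M]
    (i : M →ₗ[A] E) (hi : ∀ K : Submodule A E, Disjoint K (LinearMap.range i) → K = ⊥) :
    IsUniserialModule A E := by
  have hbot {K₁ K₂ : Submodule A E} (hdisj : Disjoint K₁ K₂) (hle : K₁.comap i ≤ K₂.comap i) :
      K₁ = ⊥ := by
    refine hi K₁ (Submodule.disjoint_def.2 ?_)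
    rintro _ hx ⟨y, rfl⟩
    exact Submodule.disjoint_def.1 hdisj _ hx (hle hx)
  refine .of_fg fun N hN ↦ ?_
  have : Module.Finite A N := .of_fg hN
  refine hNak.isUniserialModule fun N₁ N₂ h ↦ ?_
  have hdisj : Disjoint (N₁.map N.subtype) (N₂.map N.subtype) :=
    Submodule.disjoint_map N.injective_subtype h.disjoint
  have hmap {K : Submodule A N} (hK : K.map N.subtype = ⊥) : K = ⊥ :=
    Submodule.map_injective_of_injective N.injective_subtype (hK.trans (Submodule.map_bot _).symm)
  exact (IsUniserialModule.le_total _ _).imp (hmap ∘ hbot hdisj) (hmap ∘ hbot hdisj.symm)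

theorem IsInjectiveEnvelopeHom.eq_bot_of_disjoint {M I : ModuleCat.{0} A} {f : M ⟶ I}
    (hf : IsInjectiveEnvelopeHom A f) {K : Submodule A I}
    (hK : Disjoint K (LinearMap.range f.hom)) : K = ⊥ := by
  obtain ⟨-, hmono, hess⟩ := hf
  have hmono' : Mono (f ≫ ModuleCat.ofHom K.mkQ) := by
    rw [ModuleCat.mono_iff_injective] at hmono ⊢
    refine (injective_iff_map_eq_zero _).2 fun x hx ↦ (map_eq_zero_iff f.hom hmono).1 ?_
    exact Submodule.disjoint_def.1 hK _ ((Submodule.Quotient.mk_eq_zero K).1 hx) ⟨x, rfl⟩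
  simpa only [ModuleCat.mono_iff_ker_eq_bot, ModuleCat.hom_ofHom, K.ker_mkQ] using hess _ _ hmono'

theorem IsNakayama.isUniserialModule_of_isInjectiveEnvelopeHom (hNak : IsNakayama A)
    {M I : ModuleCat.{0} A} [IsUniserialModule A M] {f : M ⟶ I}
    (hf : IsInjectiveEnvelopeHom A f) : IsUniserialModule A I :=
  hNak.isUniserialModule_of_essential f.hom fun _ ↦ hf.eq_bot_of_disjoint

end Nakayama

section ProjectiveDimension

variable {A : Type} [Ring A]

theorem projDimLE_iff {n : ℕ} {M : ModuleCat.{0} A} :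
    ProjDimLE A n M ↔ HasProjectiveDimensionLE M n := by
  have hker {P M : ModuleCat.{0} A} (f : P ⟶ M) [Epi f] :
      (ShortComplex.mk (kernel.ι f) f (kernel.condition f)).ShortExact :=
    .mk' (ShortComplex.exact_kernel f) inferInstance inferInstance
  constructor
  · intro h
    induction h with
    | zero M h => exact projective_iff_hasProjectiveDimensionLT_one.1 h
    | succ n M P f hP hf _ ih => exact ((hker f).hasProjectiveDimensionLT_X₃_iff n hP).2 ih
  · induction n generalizing M with
    | zero => exact fun h ↦ .zero _ (projective_iff_hasProjectiveDimensionLT_one.2 h)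
    | succ n ih =>
      exact fun h ↦ .succ n M _ (Projective.π M) inferInstance inferInstance
        (ih (((hker (Projective.π M)).hasProjectiveDimensionLT_X₃_iff n inferInstance).1 h))

theorem projDim_le {M : ModuleCat.{0} A} {n : ℕ} (h : HasProjectiveDimensionLE M n) :
    projDim A M ≤ n :=
  sInf_le ⟨n, rfl, projDimLE_iff.2 h⟩

theorem le_projDim_iff {M : ModuleCat.{0} A} {c : ℕ∞} :
    c ≤ projDim A M ↔ ∀ n : ℕ, HasProjectiveDimensionLE M n → c ≤ n := by
  simp only [projDim, le_sInf_iff, Set.mem_ofPred_eq, projDimLE_iff]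
  exact ⟨fun h n hn ↦ h n ⟨n, rfl, hn⟩, fun h _ ⟨n, hd, hn⟩ ↦ hd ▸ h n hn⟩

theorem hasProjectiveDimensionLT_of_subsingleton (M : ModuleCat.{0} A) [Subsingleton M] (n : ℕ) :
    HasProjectiveDimensionLT M n :=
  have := (ModuleCat.isZero_of_subsingleton M).hasProjectiveDimensionLT_zero
  hasProjectiveDimensionLT_of_ge M 0 n n.zero_le

theorem subsingleton_of_hasProjectiveDimensionLT_zero (M : ModuleCat.{0} A)
    [HasProjectiveDimensionLT M 0] : Subsingleton M :=
  ModuleCat.isZero_iff_subsingleton.1 (isZero_of_hasProjectiveDimensionLT_zero M)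

section

variable {P M : ModuleCat.{0} A} [Projective P] (f : P ⟶ M) [Epi f] {n : ℕ}

theorem hasProjectiveDimensionLT_succ_of_ker
    (h : HasProjectiveDimensionLT (ModuleCat.of A (LinearMap.ker f.hom)) n) :
    HasProjectiveDimensionLT M (n + 1) :=
  (LinearMap.shortExact_shortComplexKer
    ((ModuleCat.epi_iff_surjective f).1 inferInstance)).hasProjectiveDimensionLT_X₃ n h
      (inferInstanceAs (HasProjectiveDimensionLT P (n + 1)))

theorem hasProjectiveDimensionLT_ker (h : HasProjectiveDimensionLT M (n + 2)) :
    HasProjectiveDimensionLT (ModuleCat.of A (LinearMap.ker f.hom)) (n + 1) :=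
  ((LinearMap.shortExact_shortComplexKer
    ((ModuleCat.epi_iff_surjective f).1 inferInstance)).hasProjectiveDimensionLT_X₃_iff n ‹_›).1 h

theorem hasProjectiveDimensionLT_ker_of_isUniserialModule [IsUniserialModule A P] [Nontrivial M]
    (h : HasProjectiveDimensionLT M (n + 1)) :
    HasProjectiveDimensionLT (ModuleCat.of A (LinearMap.ker f.hom)) n := by
  rcases n with _ | n
  · have : Module.Projective A M :=
      (IsProjective.iff_projective M).2 (projective_iff_hasProjectiveDimensionLT_one.2 h)
    have hinj := IsUniserialModule.injective_of_surjective_of_projective f.hom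
      ((ModuleCat.epi_iff_surjective f).1 inferInstance)
    have : Subsingleton (LinearMap.ker f.hom) := by
      rw [LinearMap.ker_eq_bot.2 hinj]; infer_instance
    exact hasProjectiveDimensionLT_of_subsingleton _ 0
  · exact hasProjectiveDimensionLT_ker f h

end

end ProjectiveDimension

section Dichotomy

variable {A : Type} [Ring A] [IsArtinianRing A]

theorem IsNakayama.exists_uniserial_projective_epi (hNak : IsNakayama A) (M : ModuleCat.{0} A)
    [Module.Finite A M] [IsUniserialModule A M] :
    ∃ (P : ModuleCat.{0} A) (f : P ⟶ M), Module.Finite A P ∧ IsUniserialModule A P ∧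
      Projective P ∧ Epi f := by
  obtain ⟨P, f, hP, hf⟩ := exists_isProjectiveCoverHom M
  exact ⟨P, f, hP, hNak.isUniserialModule_of_isProjectiveCoverHom hf, hf.1, hf.2.1⟩

theorem IsNakayama.exists_epi_ker_of_mono (hNak : IsNakayama A) {M N P : ModuleCat.{0} A}
    (j : M ⟶ N) [hj : Mono j] (g : P ⟶ N) [hg : Epi g] [Module.Finite A P] [IsUniserialModule A P] :
    ∃ (Q : ModuleCat.{0} A) (q : Q ⟶ M)
      (k : ModuleCat.of A (LinearMap.ker q.hom) ⟶ ModuleCat.of A (LinearMap.ker g.hom)),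
      Module.Finite A Q ∧ IsUniserialModule A Q ∧ Projective Q ∧ Epi q ∧ Epi k := by
  rw [ModuleCat.mono_iff_injective] at hj
  rw [ModuleCat.epi_iff_surjective] at hg
  let Y : Submodule A P := (LinearMap.range j.hom).comap g.hom
  let e : M ≃ₗ[A] LinearMap.range j.hom := .ofInjective j.hom hj
  let h : Y →ₗ[A] M := e.symm.toLinearMap ∘ₗ g.hom.restrict fun _ hy ↦ hy
  have hjh (y : Y) : j.hom (h y) = g.hom y := congrArg Subtype.val (e.apply_symm_apply _)
  have hh : Epi (ModuleCat.ofHom h) := by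
    refine (ModuleCat.epi_iff_surjective _).2 fun m ↦ ?_
    obtain ⟨y, hy⟩ := hg (j.hom m)
    exact ⟨⟨y, m, hy.symm⟩, hj ((hjh _).trans hy)⟩
  obtain ⟨Q, π, hQ, hQu, hQp, hπ⟩ := hNak.exists_uniserial_projective_epi (.of A Y)
  have hker (x : Q) (hx : x ∈ LinearMap.ker (π ≫ ModuleCat.ofHom h).hom) :
      (Y.subtype ∘ₗ π.hom) x ∈ LinearMap.ker g.hom :=
    (hjh _).symm.trans ((congrArg j.hom hx).trans (map_zero j.hom))
  refine ⟨Q, π ≫ ModuleCat.ofHom h, ModuleCat.ofHom ((Y.subtype ∘ₗ π.hom).restrict hker),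
    hQ, hQu, hQp, epi_comp _ _, (ModuleCat.epi_iff_surjective _).2 ?_⟩
  rintro ⟨z, hz⟩
  have hzY : z ∈ Y := ⟨0, (map_zero j.hom).trans hz.symm⟩
  obtain ⟨x, hx⟩ := (ModuleCat.epi_iff_surjective π).1 hπ ⟨z, hzY⟩
  refine ⟨⟨x, hj ?_⟩, Subtype.ext (congrArg (Subtype.val (p := (· ∈ Y))) hx)⟩
  exact (hjh _).trans ((congrArg (g.hom ∘ Subtype.val) hx).trans (hz.trans (map_zero j.hom).symm))

mutual

theorem IsNakayama.hasProjectiveDimensionLT_or_of_mono (hNak : IsNakayama A)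
    {X Y Z : ModuleCat.{0} A} (i : X ⟶ Y) (j : Y ⟶ Z) [Mono i] [Mono j] [Module.Finite A Z]
    [IsUniserialModule A Z] : ∀ n, HasProjectiveDimensionLT Y n →
      HasProjectiveDimensionLT X n ∨ HasProjectiveDimensionLT Z n := by
  intro n hY
  rcases subsingleton_or_nontrivial Y with _ | _
  · have := ((ModuleCat.mono_iff_injective i).1 inferInstance).subsingleton
    exact Or.inl (hasProjectiveDimensionLT_of_subsingleton X n)
  match n, hY with
  | 0, hY =>
    exact absurd (subsingleton_of_hasProjectiveDimensionLT_zero Y) (not_subsingleton Y)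
  | n + 1, hY =>
    obtain ⟨P, g, hP, hPu, hPp, hg⟩ := hNak.exists_uniserial_projective_epi Z
    obtain ⟨Q, q, k, hQ, hQu, hQp, hq, hk⟩ := hNak.exists_epi_ker_of_mono j g
    obtain ⟨Q', q', k', hQ', hQu', hQp', hq', hk'⟩ := hNak.exists_epi_ker_of_mono i q
    have hker := hasProjectiveDimensionLT_ker_of_isUniserialModule q hY
    exact (IsNakayama.hasProjectiveDimensionLT_or_of_epi hNak k' k n hker).imp
      (hasProjectiveDimensionLT_succ_of_ker q') (hasProjectiveDimensionLT_succ_of_ker g)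

theorem IsNakayama.hasProjectiveDimensionLT_or_of_epi (hNak : IsNakayama A)
    {U V W : ModuleCat.{0} A} (p : U ⟶ V) (q : V ⟶ W) [Epi p] [Epi q] [Module.Finite A U]
    [IsUniserialModule A U] : ∀ n, HasProjectiveDimensionLT V n →
      HasProjectiveDimensionLT U n ∨ HasProjectiveDimensionLT W n := by
  intro n hV
  rcases subsingleton_or_nontrivial V with _ | _
  · have := ((ModuleCat.epi_iff_surjective q).1 inferInstance).subsingleton
    exact Or.inr (hasProjectiveDimensionLT_of_subsingleton W n)
  match n, hV with
  | 0, hV =>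
    exact absurd (subsingleton_of_hasProjectiveDimensionLT_zero V) (not_subsingleton V)
  | n + 1, hV =>
    obtain ⟨P, g, hP, hPu, hPp, hg⟩ := hNak.exists_uniserial_projective_epi U
    have hgp : LinearMap.ker g.hom ≤ LinearMap.ker (g ≫ p).hom := LinearMap.ker_le_ker_comp _ _
    have hgpq : LinearMap.ker (g ≫ p).hom ≤ LinearMap.ker (g ≫ p ≫ q).hom :=
      LinearMap.ker_le_ker_comp (g ≫ p).hom q.hom
    let i := ModuleCat.ofHom (Submodule.inclusion hgp)
    let j := ModuleCat.ofHom (Submodule.inclusion hgpq)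
    have : Mono i := (ModuleCat.mono_iff_injective i).2 (Submodule.inclusion_injective hgp)
    have : Mono j := (ModuleCat.mono_iff_injective j).2 (Submodule.inclusion_injective hgpq)
    have hker := hasProjectiveDimensionLT_ker_of_isUniserialModule (g ≫ p) hV
    exact (IsNakayama.hasProjectiveDimensionLT_or_of_mono hNak i j n hker).imp
      (hasProjectiveDimensionLT_succ_of_ker g) (hasProjectiveDimensionLT_succ_of_ker (g ≫ p ≫ q))

end

end Dichotomy

section InjectiveEnvelope

variable {A : Type} [Ring A] [IsArtinianRing A] {X Y I : ModuleCat.{0} A}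

theorem IsNakayama.hasProjectiveDimensionLE_or_of_isInjectiveEnvelopeHom (hNak : IsNakayama A)
    [IsUniserialModule A X] [Module.Finite A Y] {f : X ⟶ I} (hf : IsInjectiveEnvelopeHom A f)
    (g : X ⟶ Y) [Mono g] {n : ℕ} (hY : HasProjectiveDimensionLE Y n) :
    HasProjectiveDimensionLE X n ∨ HasProjectiveDimensionLE I n := by
  rcases subsingleton_or_nontrivial X with _ | _
  · exact Or.inl (hasProjectiveDimensionLT_of_subsingleton X (n + 1))
  have hI : IsUniserialModule A I := hNak.isUniserialModule_of_isInjectiveEnvelopeHom hf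
  have : Module.Finite A I := IsUniserialModule.finite A I
  obtain ⟨hinj, hmono, -⟩ := hf
  obtain ⟨K, r, hKu, hr, hrg⟩ :=
    hNak.exists_uniserial_retract g.hom ((ModuleCat.mono_iff_injective g).1 inferInstance)
  have hK : HasProjectiveDimensionLE (ModuleCat.of A K) n :=
    Retract.hasProjectiveDimensionLT (Y := Y)
      ⟨ModuleCat.ofHom K.subtype, ModuleCat.ofHom r, ModuleCat.hom_ext hr⟩ (n + 1)
  let i : X ⟶ ModuleCat.of A K := ModuleCat.ofHom (r ∘ₗ g.hom)
  have : Mono i := (ModuleCat.mono_iff_injective i).2 hrg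
  let j : ModuleCat.of A K ⟶ I := Injective.factorThru f i
  have hij : i ≫ j = f := Injective.comp_factorThru f i
  have : Mono j := by
    rw [← hij, ModuleCat.mono_iff_injective] at hmono
    exact (ModuleCat.mono_iff_injective j).2
      (IsUniserialModule.injective_of_comp_injective i.hom j.hom hmono)
  exact hNak.hasProjectiveDimensionLT_or_of_mono i j (n + 1) hK

end InjectiveEnvelope

section Horseshoe

variable {R X Y W P Q : Type*} [Ring R] [AddCommGroup X] [Module R X] [AddCommGroup Y]
  [Module R Y] [AddCommGroup W] [Module R W] [AddCommGroup P] [Module R P] [AddCommGroup Q]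
  [Module R Q] {i : X →ₗ[R] Y} {p : Y →ₗ[R] W}

theorem exists_surjective_prod_exact_ker [Module.Projective R Q] (hi : Function.Injective i)
    (hip : Function.Exact i p) (hp : Function.Surjective p) (f : P →ₗ[R] X)
    (hf : Function.Surjective f) (g : Q →ₗ[R] W) (hg : Function.Surjective g) :
    ∃ (h : P × Q →ₗ[R] Y) (a : LinearMap.ker f →ₗ[R] LinearMap.ker h)
      (b : LinearMap.ker h →ₗ[R] LinearMap.ker g), Function.Surjective h ∧
      Function.Injective a ∧ Function.Exact a b ∧ Function.Surjective b := by
  obtain ⟨l, hl⟩ := Module.projective_lifting_property p g hp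
  replace hl (y : Q) : p (l y) = g y := LinearMap.congr_fun hl y
  have hpi (x : X) : p (i x) = 0 := hip.apply_apply_eq_zero x
  let h : P × Q →ₗ[R] Y := (i ∘ₗ f).coprod l
  have hph (z : P × Q) : p (h z) = g z.2 := by simp [h, hl, hpi]
  have hlift (y : Y) (b : Q) (hb : g b = p y) : ∃ a, h (a, b) = y := by
    obtain ⟨x, hx⟩ := (hip (y - l b)).1 (by rw [map_sub, hl, hb, sub_self])
    obtain ⟨a, rfl⟩ := hf x
    exact ⟨a, by simp [h, hx]⟩
  let a : LinearMap.ker f →ₗ[R] LinearMap.ker h := (LinearMap.inl R P Q).restrict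
    fun x (hx : f x = 0) ↦ by simp [h, hx]
  let b : LinearMap.ker h →ₗ[R] LinearMap.ker g := (LinearMap.snd R P Q).restrict
    fun z (hz : h z = 0) ↦ (hph z).symm.trans (by rw [hz, map_zero])
  refine ⟨h, a, b, fun y ↦ ?_, fun x y hxy ↦ ?_, fun z ↦ ⟨fun hz ↦ ?_, ?_⟩, fun ⟨y, hy⟩ ↦ ?_⟩
  · obtain ⟨c, hc⟩ := hg (p y)
    obtain ⟨x, hx⟩ := hlift y c hc
    exact ⟨(x, c), hx⟩
  · exact Subtype.ext (congrArg (fun z ↦ z.1.1) hxy)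
  · have hz₂ : z.1.2 = 0 := congrArg Subtype.val hz
    have hz₁ : f z.1.1 = 0 := hi (by simpa only [h, LinearMap.coprod_apply, hz₂, map_zero, add_zero,
      LinearMap.comp_apply] using LinearMap.mem_ker.1 z.2)
    exact ⟨⟨z.1.1, hz₁⟩, Subtype.ext (Prod.ext rfl hz₂.symm)⟩
  · rintro ⟨x, rfl⟩
    rfl
  · obtain ⟨x, hx⟩ := hlift 0 y (hy.trans (map_zero p).symm)
    exact ⟨⟨(x, y), hx⟩, rfl⟩

theorem exists_retract_ker_prod_of_exact [Module.Projective R Y] [Module.Projective R P]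
    (hi : Function.Injective i) (hip : Function.Exact i p) (hp : Function.Surjective p)
    (g : P →ₗ[R] W) (hg : Function.Surjective g) :
    ∃ (s : X →ₗ[R] LinearMap.ker g × Y) (r : LinearMap.ker g × Y →ₗ[R] X),
      r ∘ₗ s = LinearMap.id := by
  obtain ⟨a, ha⟩ := Module.projective_lifting_property g p hg
  obtain ⟨b, hb⟩ := Module.projective_lifting_property p g hp
  let e : X ≃ₗ[R] LinearMap.ker p :=
    (LinearEquiv.ofInjective i hi).trans (.ofEq _ _ hip.linearMap_ker_eq.symm)
  have ha' (y : Y) : g (a y) = p y := LinearMap.congr_fun ha y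
  have hb' (y : P) : p (b y) = g y := LinearMap.congr_fun hb y
  let s : X →ₗ[R] LinearMap.ker g × Y :=
    ((a ∘ₗ i).codRestrict _ fun x ↦ by simp [ha', hip.apply_apply_eq_zero]).prod i
  let t : LinearMap.ker g × Y →ₗ[R] LinearMap.ker p :=
    ((b ∘ₗ (LinearMap.ker g).subtype).coprod (LinearMap.id - b ∘ₗ a)).codRestrict _
      fun z ↦ by simp [ha', hb']
  refine ⟨s, e.symm.toLinearMap ∘ₗ t, LinearMap.ext fun x ↦ (e.symm_apply_eq).2 ?_⟩
  exact Subtype.ext (add_sub_cancel (b (a (i x))) (i x))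

end Horseshoe

section Delooping

variable {A : Type} [Ring A]

theorem exists_projective_isSyzygyOf_ker [IsArtinianRing A] (M : Type) [AddCommGroup M]
    [Module A M] [Module.Finite A M] :
    ∃ (P : ModuleCat.{0} A) (f : P →ₗ[A] M), Module.Finite A P ∧ Module.Projective A P ∧
      Function.Surjective f ∧ IsSyzygyOf A (ModuleCat.of A M) (.of A (LinearMap.ker f)) := by
  obtain ⟨P, f, hP, hf⟩ := exists_isProjectiveCoverHom (.of A M)
  obtain ⟨hPp, hfs, -⟩ := isProjectiveCoverHom_iff.1 hf
  exact ⟨P, f.hom, hP, hPp, hfs, P, f, hf, ⟨(ModuleCat.kernelIsoKer f).symm⟩⟩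

theorem inAdd_prod_of_retract {X K Y : Type} [AddCommGroup X] [Module A X] [AddCommGroup K]
    [Module A K] [AddCommGroup Y] [Module A Y] [Module.Finite A Y] [Module.Projective A Y]
    (s : X →ₗ[A] K × Y) (r : K × Y →ₗ[A] X) (hrs : r ∘ₗ s = LinearMap.id) :
    InAdd A (ModuleCat.of A X) (ModuleCat.of A (A × K)) := by
  obtain ⟨k, π, σ, -, -, hπσ⟩ := Module.Finite.exists_comp_eq_id_of_projective A Y
  let j : K × Y →ₗ[A] Fin (k + 1) → A × K := LinearMap.pi
    (Fin.cons (.inr A A K ∘ₗ .fst A K Y) fun t ↦ .inl A A K ∘ₗ .proj t ∘ₗ σ ∘ₗ .snd A K Y)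
  let q : (Fin (k + 1) → A × K) →ₗ[A] K × Y :=
    (.snd A A K ∘ₗ .proj 0 : _ →ₗ[A] K).prod
      (π ∘ₗ LinearMap.pi fun t ↦ .fst A A K ∘ₗ .proj t.succ)
  have hqj (z : K × Y) : q (j z) = z := Prod.ext rfl (LinearMap.congr_fun hπσ z.2)
  refine ⟨k + 1, ModuleCat.ofHom (j ∘ₗ s), ModuleCat.ofHom (r ∘ₗ q), ?_⟩
  ext x
  exact (congrArg r (hqj (s x))).trans (LinearMap.congr_fun hrs x)

theorem exists_isNthSyzygy_inAdd_of_exact [IsArtinianRing A] {X Y W : Type} [AddCommGroup X]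
    [Module A X] [AddCommGroup Y] [Module A Y] [AddCommGroup W] [Module A W] [Module.Finite A Y]
    {i : X →ₗ[A] Y} {p : Y →ₗ[A] W} (hi : Function.Injective i) (hip : Function.Exact i p)
    (hp : Function.Surjective p) {n : ℕ} (hY : HasProjectiveDimensionLE (ModuleCat.of A Y) n) :
    ∃ X' W', IsNthSyzygy A n (ModuleCat.of A X) X' ∧
      IsNthSyzygy A (n + 1) (ModuleCat.of A W) W' ∧ InAdd A X' (ModuleCat.of A (A × W')) := by
  induction n generalizing X Y W with
  | zero =>
    have : Module.Finite A W := .of_surjective p hp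
    obtain ⟨Q, g, -, hQp, hg, hgW⟩ := exists_projective_isSyzygyOf_ker (A := A) W
    have : Module.Projective A Y :=
      (IsProjective.iff_projective Y).2 (projective_iff_hasProjectiveDimensionLT_one.2 hY)
    obtain ⟨s, r, hrs⟩ := exists_retract_ker_prod_of_exact hi hip hp g hg
    exact ⟨_, _, ⟨Iso.refl _⟩, ⟨_, hgW, ⟨Iso.refl _⟩⟩, inAdd_prod_of_retract s r hrs⟩
  | succ n ih =>
    have : Module.Finite A X := .of_injective i hi
    have : Module.Finite A W := .of_surjective p hp
    obtain ⟨P, f, hP, hPp, hf, hfX⟩ := exists_projective_isSyzygyOf_ker (A := A) X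
    obtain ⟨Q, g, hQ, hQp, hg, hgW⟩ := exists_projective_isSyzygyOf_ker (A := A) W
    obtain ⟨h, a, b, hh, ha, hab, hb⟩ := exists_surjective_prod_exact_ker hi hip hp f hf g hg
    have : Projective (ModuleCat.of A (P × Q)) := (IsProjective.iff_projective _).1 inferInstance
    have : Epi (ModuleCat.ofHom h) := (ModuleCat.epi_iff_surjective _).2 hh
    obtain ⟨X', W', hX', hW', hadd⟩ :=
      ih ha hab hb (hasProjectiveDimensionLT_ker (ModuleCat.ofHom h) hY)
    exact ⟨X', W', ⟨_, hfX, hX'⟩, ⟨_, hgW, hW'⟩, hadd⟩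

theorem delLevel_le_projDim_of_mono [IsArtinianRing A] {X Y : ModuleCat.{0} A}
    [Module.Finite A Y] (f : X ⟶ Y) [Mono f] : delLevel A X ≤ projDim A Y := by
  refine le_projDim_iff.2 fun n hn ↦ sInf_le ⟨n, rfl, ?_⟩
  obtain ⟨X', W', hX', hW', hadd⟩ := exists_isNthSyzygy_inAdd_of_exact
    ((ModuleCat.mono_iff_injective f).1 inferInstance) (LinearMap.exact_map_mkQ_range f.hom)
    (Submodule.mkQ_surjective _) hn
  exact ⟨X', hX', _, inferInstance, W', hW', hadd⟩

end Delooping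

end ArtinAlg

open ArtinAlg in
theorem statement_11_general (A : Type) [Ring A] [IsArtinianRing A] (hNak : IsNakayama A)
    (X : ModuleCat.{0} A) (hX : IsUniserial A X) (I : ModuleCat.{0} A) (hI : IsInjEnvOf A X I) :
    min (projDim A X) (projDim A I) =
      sInf {x : ℕ∞ | ∃ Y : ModuleCat.{0} A, Module.Finite A ↥Y ∧
        (∃ f : X ⟶ Y, CategoryTheory.Mono f) ∧ x = projDim A Y} ∧
    delLevel A X ≤ min (projDim A X) (projDim A I) := by
  obtain ⟨f, hf⟩ := hI
  have hXu : IsUniserialModule A X := ⟨hX⟩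
  have hIu : IsUniserialModule A I := hNak.isUniserialModule_of_isInjectiveEnvelopeHom hf
  have hXf : Module.Finite A X := IsUniserialModule.finite A X
  have hIf : Module.Finite A I := IsUniserialModule.finite A I
  have hmono : Mono f := hf.2.1
  refine ⟨le_antisymm (le_sInf ?_) (le_min ?_ ?_), le_min ?_ ?_⟩
  · rintro _ ⟨Y, hY, ⟨g, hg⟩, rfl⟩
    refine le_projDim_iff.2 fun n hn ↦ min_le_iff.2 ?_
    exact (hNak.hasProjectiveDimensionLE_or_of_isInjectiveEnvelopeHom hf g hn).imp
      projDim_le projDim_le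
  · exact sInf_le ⟨X, hXf, ⟨𝟙 X, inferInstance⟩, rfl⟩
  · exact sInf_le ⟨I, hIf, ⟨f, hmono⟩, rfl⟩
  · exact delLevel_le_projDim_of_mono (𝟙 X)
  · exact delLevel_le_projDim_of_mono f

open ArtinAlg in
/-- Let `A` be a Nakayama algebra and `X` an indecomposable module, and
set `e(X) = min {pd X, pd (I X)}`. Then
`e(X) = min {pd Y : Y finitely generated and X ⊆ Y}`, and `del X ≤ e(X)`. -/
theorem statement_11 (R : Type) [CommRing R] [IsArtinianRing R]
    (A : Type) [Ring A] [Algebra R A] [Module.Finite R A]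
    (hNak : IsNakayama A)
    (X : ModuleCat.{0} A) (hX : Module.Finite A ↥X) (hInd : Indec A X)
    (I : ModuleCat.{0} A) (hI : IsInjEnvOf A X I) :
    min (projDim A X) (projDim A I) =
      sInf {x : ℕ∞ | ∃ Y : ModuleCat.{0} A, Module.Finite A ↥Y ∧
        (∃ f : X ⟶ Y, CategoryTheory.Mono f) ∧ x = projDim A Y} ∧
    delLevel A X ≤ min (projDim A X) (projDim A I) :=
  have := IsArtinianRing.of_finite R A
  statement_11_general A hNak X (hNak X hX hInd) I hI
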